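/- Let n ≥ 1 be a natural number, let C ≥ 4e be a real number, let V be a finite set with |V| ≥ C·n, and let k ≥ 1. Let H be a random function from Fin n to V (defined on some probability space) that is 2k-wise independent and uniform. Then with probability at least 1 − 4·(4e/C)^{min(k, n/C)}, there are at most n/2 indices i ∈ Fin n for which there exists an index j ≠ i with H(i) = H(j). -/

import Mathlib

open MeasureTheory Real Set

/-- `H : Ω → Fin n → V` is a `k`-wise independent and uniform random function:
for every set `T` of at most `k` indices, the joint distribution of `(H i)_{i ∈ T}`
is that of independent uniform random variables on `V`. -/
def KWiseUniform {Ω V : Type*} [MeasurableSpace Ω] [Fintype V]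
    (μ : Measure Ω) {n : ℕ} (k : ℕ) (H : Ω → Fin n → V) : Prop :=
  ∀ T : Finset (Fin n), T.card ≤ k → ∀ f : Fin n → V,
    μ {ω | ∀ i ∈ T, H ω i = f i} = ((Fintype.card V : ENNReal))⁻¹ ^ T.card

/-!
Suppose `s` indices collide. After any `t` disjoint colliding pairs are removed, at least `s - 3t`
of the remaining indices still collide among themselves: besides the `2t` removed indices, only
the indices that lost all their partners drop out, and there is at most one of those for each of
the `t` removed values. Hence there are at least `∏ t < m, (s - 3t)` sequences of `m` disjoint
colliding ordered pairs. On the other hand, `2m`-wise independence bounds the expected number of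
such sequences by `(n² / |V|)ᵐ`, and Markov's inequality with `s ≥ n / 2` and `m = ⌈min k (n / C)⌉`
gives the tail bound `(8 / C)ᵐ`, since `n² / |V| ≤ n / C ≤ (8 / C) (s - 3t)` for all `t < m`.
-/

section Collisions

variable {ι V : Type*} [Fintype ι] [DecidableEq ι] [DecidableEq V]

/-- The indices that share their value under `h` with another index. -/
def collidingIndices (h : ι → V) : Finset ι :=
  {i | ∃ j, j ≠ i ∧ h i = h j}

/-- The ordered pairs of distinct indices outside `U` that share their value under `h`. -/
def collidingPairs (h : ι → V) (U : Finset ι) : Finset (ι × ι) :=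
  {p | p.1 ∉ U ∧ p.2 ∉ U ∧ p.1 ≠ p.2 ∧ h p.1 = h p.2}

/-- The sequences of `m` pairwise disjoint ordered pairs of colliding indices. A sequence is
encoded as the tuple of its first components together with the tuple of its second components. -/
def collidingMatchings (h : ι → V) (m : ℕ) : Finset ((Fin m → ι) × (Fin m → ι)) :=
  {p | Function.Injective (Sum.elim p.1 p.2) ∧ ∀ t, h (p.1 t) = h (p.2 t)}

lemma card_collidingIndices_le (h : ι → V) (U : Finset ι) :
    (collidingIndices h).card ≤
      (collidingPairs h U).card + U.card + (U.image h).card := by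
  set paired := (collidingPairs h U).image Prod.fst
  set lonely := collidingIndices h \ (paired ∪ U) with hlonely
  have mem_paired {i j : ι} (hi : i ∉ U) (hj : j ∉ U) (hij : i ≠ j) (h_eq : h i = h j) :
      i ∈ paired :=
    Finset.mem_image.2 ⟨(i, j), by simp [collidingPairs, hi, hj, hij, h_eq], rfl⟩
  have card_lonely : lonely.card ≤ (U.image h).card := by
    refine Finset.card_le_card_of_injOn h (fun i hi ↦ ?_) fun i hi j hj h_eq ↦ ?_
    · simp only [hlonely, collidingIndices, Finset.coe_sdiff, Finset.coe_union, Finset.coe_filter,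
        Finset.mem_univ, true_and, mem_sdiff, mem_ofPred_eq, mem_union, Finset.mem_coe,
        not_or] at hi
      obtain ⟨⟨j, hji, h_eq⟩, hi_paired, hiU⟩ := hi
      have hjU : j ∈ U := by
        by_contra hjU
        exact hi_paired (mem_paired hiU hjU hji.symm h_eq)
      exact Finset.mem_coe.2 (Finset.mem_image.2 ⟨j, hjU, h_eq.symm⟩)
    · simp only [hlonely, Finset.coe_sdiff, Finset.coe_union, mem_sdiff, mem_union,
        Finset.mem_coe, not_or] at hi hj
      by_contra hij
      exact hi.2.1 (mem_paired hi.2.2 hj.2.2 hij h_eq)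
  calc (collidingIndices h).card ≤ lonely.card + (paired ∪ U).card :=
        Finset.card_le_card_sdiff_add_card
    _ ≤ lonely.card + (paired.card + U.card) := by gcongr; exact Finset.card_union_le _ _
    _ ≤ (U.image h).card + ((collidingPairs h U).card + U.card) := by
        gcongr
        exact Finset.card_image_le
    _ = (collidingPairs h U).card + U.card + (U.image h).card := by ring

lemma card_collidingIndices_le_add_three_mul {h : ι → V} {m : ℕ}
    {p : (Fin m → ι) × (Fin m → ι)} (hp : p ∈ collidingMatchings h m) :
    (collidingIndices h).card ≤
      (collidingPairs h (Finset.univ.image (Sum.elim p.1 p.2))).card + 3 * m := by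
  set U := Finset.univ.image (Sum.elim p.1 p.2) with hU
  have h_collide : ∀ t, h (p.1 t) = h (p.2 t) := (Finset.mem_filter.1 hp).2.2
  have card_U : U.card ≤ 2 * m := by
    simpa [two_mul] using Finset.card_image_le (s := Finset.univ) (f := Sum.elim p.1 p.2)
  have card_values : (U.image h).card ≤ m := by
    have : U.image h ⊆ Finset.univ.image (h ∘ p.1) := by
      rw [hU, Finset.image_image, Finset.image_subset_iff]
      rintro (t | t) - <;> simp [← h_collide]
    simpa using (Finset.card_le_card this).trans Finset.card_image_le
  have := card_collidingIndices_le h U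
  lia

lemma cons_mem_collidingMatchings {h : ι → V} {m : ℕ} {p : (Fin m → ι) × (Fin m → ι)}
    (hp : p ∈ collidingMatchings h m) {q : ι × ι}
    (hq : q ∈ collidingPairs h (Finset.univ.image (Sum.elim p.1 p.2))) :
    ((Fin.cons q.1 p.1 : Fin (m + 1) → ι), (Fin.cons q.2 p.2 : Fin (m + 1) → ι)) ∈
      collidingMatchings h (m + 1) := by
  simp only [collidingMatchings, collidingPairs, Finset.mem_filter, Finset.mem_univ, true_and,
    Finset.mem_image, Sum.exists, Sum.elim_inl, Sum.elim_inr, not_or, not_exists,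
    Sum.elim_injective, Fin.cons_injective_iff, Fin.forall_fin_succ,
    Fin.cons_zero, Fin.cons_succ, mem_range] at hp hq ⊢
  grind

lemma tails_mem_collidingMatchings {h : ι → V} {m : ℕ}
    {r : (Fin (m + 1) → ι) × (Fin (m + 1) → ι)} (hr : r ∈ collidingMatchings h (m + 1)) :
    (Fin.tail r.1, Fin.tail r.2) ∈ collidingMatchings h m := by
  obtain ⟨hr_inj, hr_collide⟩ := (Finset.mem_filter.1 hr).2
  refine Finset.mem_filter.2 ⟨Finset.mem_univ _, ?_, fun t ↦ hr_collide t.succ⟩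
  have := hr_inj.comp ((Fin.succ_injective m).sumMap (Fin.succ_injective m))
  rwa [Sum.elim_comp_map] at this

lemma card_collidingIndices_sub_mul_card_collidingMatchings_le (h : ι → V) (m : ℕ) :
    ((collidingIndices h).card - 3 * m) * (collidingMatchings h m).card ≤
      (collidingMatchings h (m + 1)).card := by
  let tails (r : (Fin (m + 1) → ι) × (Fin (m + 1) → ι)) : (Fin m → ι) × (Fin m → ι) :=
    (Fin.tail r.1, Fin.tail r.2)
  refine Finset.mul_card_image_le_card_of_maps_to (f := tails) (fun r hr ↦ ?_) _ fun p hp ↦ ?_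
  · exact tails_mem_collidingMatchings hr
  · calc (collidingIndices h).card - 3 * m
        ≤ (collidingPairs h (Finset.univ.image (Sum.elim p.1 p.2))).card :=
          Nat.sub_le_of_le_add (card_collidingIndices_le_add_three_mul hp)
      _ ≤ ((collidingMatchings h (m + 1)).filter (tails · = p)).card := by
          refine Finset.card_le_card_of_injOn
            (fun q ↦ ((Fin.cons q.1 p.1 : Fin (m + 1) → ι), (Fin.cons q.2 p.2 : Fin (m + 1) → ι)))
            (fun q hq ↦ ?_) fun q _ q' _ hqq' ↦ ?_
          · exact Finset.mem_coe.2 <| Finset.mem_filter.2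
              ⟨cons_mem_collidingMatchings hp hq, by simp [tails]⟩
          · simp only [Prod.mk.injEq, Fin.cons_inj, and_true] at hqq'
            exact Prod.ext hqq'.1 hqq'.2

lemma prod_le_card_collidingMatchings (h : ι → V) (m : ℕ) :
    ∏ t ∈ Finset.range m, ((collidingIndices h).card - 3 * t) ≤
      (collidingMatchings h m).card := by
  induction m with
  | zero => simp [collidingMatchings, Function.injective_of_subsingleton]
  | succ m ih =>
    rw [Finset.prod_range_succ_comm]
    exact (Nat.mul_le_mul_left _ ih).trans
      (card_collidingIndices_sub_mul_card_collidingMatchings_le h m)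

end Collisions

lemma sq_div_le_sub_three_mul {C n N s t : ℝ} (hC : 8 ≤ C) (hn : 0 ≤ n) (hN : C * n ≤ N)
    (hs : n ≤ 2 * s) (ht : C * t ≤ n) : n ^ 2 / N ≤ (s - 3 * t) * (8 / C) := by
  have hC_pos : 0 < C := by linarith
  have h_sub : n / 8 ≤ s - 3 * t := by
    have : t ≤ n / 8 := ((le_div_iff₀' hC_pos).2 ht).trans (by gcongr)
    linarith
  calc n ^ 2 / N ≤ n / C := by
        have h_eq : n / C * (C * n) = n ^ 2 := by field_simp
        refine div_le_of_le_mul₀ ((by positivity : 0 ≤ C * n).trans hN) (by positivity) ?_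
        rw [← h_eq]
        gcongr
    _ = n / 8 * (8 / C) := by ring
    _ ≤ (s - 3 * t) * (8 / C) := by gcongr

namespace KWiseUniform

variable {Ω V : Type*} [MeasurableSpace Ω] [Fintype V] {μ : Measure Ω} {n k : ℕ}
  {H : Ω → Fin n → V}

lemma measureReal_forall_eq [Nonempty V] (hH : KWiseUniform μ k H) {σ : Type*} [Fintype σ]
    {g : σ → Fin n} (hg : Function.Injective g) (hσ : Fintype.card σ ≤ k) (v : σ → V) :
    μ.real {ω | ∀ s, H ω (g s) = v s} = (Fintype.card V : ℝ)⁻¹ ^ Fintype.card σ := by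
  have h_card : (Finset.univ.map ⟨g, hg⟩).card = Fintype.card σ := by
    rw [Finset.card_map, Finset.card_univ]
  have := hH (Finset.univ.map ⟨g, hg⟩) (h_card.trans_le hσ)
    (Function.extend g v fun _ ↦ Classical.arbitrary V)
  simp only [Finset.mem_map, Finset.mem_univ, true_and, Function.Embedding.coeFn_mk,
    forall_exists_index, forall_apply_eq_imp_iff, hg.extend_apply, h_card] at this
  simp [measureReal_def, this]

lemma measureReal_forall_collide_le [Nonempty V] [IsFiniteMeasure μ] (hH : KWiseUniform μ k H)
    {m : ℕ} {a b : Fin m → Fin n} (hab : Function.Injective (Sum.elim a b)) (hm : 2 * m ≤ k) :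
    μ.real {ω | ∀ t, H ω (a t) = H ω (b t)} ≤ (Fintype.card V : ℝ)⁻¹ ^ m := by
  have h_union : {ω | ∀ t, H ω (a t) = H ω (b t)} ⊆
      ⋃ v : Fin m → V, {ω | ∀ s, H ω (Sum.elim a b s) = Sum.elim v v s} := fun ω hω ↦
    mem_iUnion.2 ⟨fun t ↦ H ω (a t), Sum.forall.2 ⟨fun _ ↦ rfl, fun t ↦ (hω t).symm⟩⟩
  have h_card : Fintype.card (Fin m ⊕ Fin m) = m + m := by simp
  calc μ.real {ω | ∀ t, H ω (a t) = H ω (b t)}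
      ≤ ∑ v : Fin m → V, μ.real {ω | ∀ s, H ω (Sum.elim a b s) = Sum.elim v v s} :=
        (measureReal_mono h_union).trans (measureReal_iUnion_fintype_le _)
    _ = ∑ _v : Fin m → V, (Fintype.card V : ℝ)⁻¹ ^ (m + m) :=
        Finset.sum_congr rfl fun v _ ↦ by
          rw [hH.measureReal_forall_eq hab (by lia), h_card]
    _ = (Fintype.card V : ℝ)⁻¹ ^ m := by
        simp [pow_add]

variable [MeasurableSpace V] [MeasurableSingletonClass V] [DecidableEq V]

lemma integral_card_collidingMatchings_le [Nonempty V] [IsFiniteMeasure μ]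
    (hH : KWiseUniform μ k H) (hmeas : ∀ i, Measurable fun ω ↦ H ω i) {m : ℕ} (hm : 2 * m ≤ k) :
    ∫ ω, ((collidingMatchings (H ω) m).card : ℝ) ∂μ ≤ ((n : ℝ) ^ 2 / Fintype.card V) ^ m := by
  set disjointPairs : Finset ((Fin m → Fin n) × (Fin m → Fin n)) :=
    {p | Function.Injective (Sum.elim p.1 p.2)}
  let collide (p : (Fin m → Fin n) × (Fin m → Fin n)) : Set Ω :=
    {ω | ∀ t, H ω (p.1 t) = H ω (p.2 t)}
  have measurableSet_collide (p) : MeasurableSet (collide p) := by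
    simp only [collide, ofPred_forall]
    exact .iInter fun t ↦ measurableSet_eq_fun (hmeas _) (hmeas _)
  have integrable_indicator (p) : Integrable ((collide p).indicator (1 : Ω → ℝ)) μ :=
    (integrable_const 1).indicator (measurableSet_collide p)
  have card_eq_sum (ω : Ω) : ((collidingMatchings (H ω) m).card : ℝ) =
      ∑ p ∈ disjointPairs, (collide p).indicator 1 ω := by
    simp [collidingMatchings, disjointPairs, collide, indicator_apply, ← Finset.filter_filter]
  calc ∫ ω, ((collidingMatchings (H ω) m).card : ℝ) ∂μ
      = ∑ p ∈ disjointPairs, μ.real (collide p) := by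
        simp_rw [card_eq_sum]
        rw [integral_finsetSum _ fun p _ ↦ integrable_indicator p]
        exact Finset.sum_congr rfl fun p _ ↦ integral_indicator_one (measurableSet_collide p)
    _ ≤ ∑ _p ∈ disjointPairs, (Fintype.card V : ℝ)⁻¹ ^ m :=
        Finset.sum_le_sum fun p hp ↦
          hH.measureReal_forall_collide_le (Finset.mem_filter.1 hp).2 hm
    _ ≤ ∑ _p : (Fin m → Fin n) × (Fin m → Fin n), (Fintype.card V : ℝ)⁻¹ ^ m :=
        Finset.sum_le_sum_of_subset_of_nonneg (Finset.subset_univ _) fun _ _ _ ↦ by positivity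
    _ = ((n : ℝ) ^ 2 / Fintype.card V) ^ m := by
        simp [div_eq_mul_inv, mul_pow, sq]

lemma prod_mul_measureReal_le_card_collidingIndices_le [Nonempty V] [IsFiniteMeasure μ]
    (hH : KWiseUniform μ k H) (hmeas : ∀ i, Measurable fun ω ↦ H ω i) {m : ℕ} (hm : 2 * m ≤ k)
    (s : ℕ) :
    (∏ t ∈ Finset.range m, ((s - 3 * t : ℕ) : ℝ)) *
        μ.real {ω | s ≤ (collidingIndices (H ω)).card} ≤
      ((n : ℝ) ^ 2 / Fintype.card V) ^ m := by
  set P := ∏ t ∈ Finset.range m, (s - 3 * t)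
  have h_int : Integrable (fun ω ↦ ((collidingMatchings (H ω) m).card : ℝ)) μ :=
    (Integrable.of_finite (f := fun h : Fin n → V ↦ ((collidingMatchings h m).card : ℝ))
      ).comp_measurable (measurable_pi_iff.2 hmeas)
  have h_subset : {ω | s ≤ (collidingIndices (H ω)).card} ⊆
      {ω | (P : ℝ) ≤ (collidingMatchings (H ω) m).card} := fun ω (hω : s ≤ _) ↦ by
    have : P ≤ ∏ t ∈ Finset.range m, ((collidingIndices (H ω)).card - 3 * t) :=
      Finset.prod_le_prod' fun t _ ↦ Nat.sub_le_sub_right hω _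
    exact (Nat.cast_le (α := ℝ)).2 (this.trans (prod_le_card_collidingMatchings _ _))
  calc (∏ t ∈ Finset.range m, ((s - 3 * t : ℕ) : ℝ)) *
        μ.real {ω | s ≤ (collidingIndices (H ω)).card}
      ≤ P * μ.real {ω | (P : ℝ) ≤ (collidingMatchings (H ω) m).card} := by
        rw [← Nat.cast_prod]
        exact mul_le_mul_of_nonneg_left (measureReal_mono h_subset) (Nat.cast_nonneg _)
    _ ≤ ∫ ω, ((collidingMatchings (H ω) m).card : ℝ) ∂μ :=
        mul_meas_ge_le_integral_of_nonneg (.of_forall fun _ ↦ Nat.cast_nonneg _) h_int _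
    _ ≤ ((n : ℝ) ^ 2 / Fintype.card V) ^ m := hH.integral_card_collidingMatchings_le hmeas hm

lemma measureReal_lt_two_mul_card_collidingIndices_le [Nonempty V] [IsFiniteMeasure μ]
    (hH : KWiseUniform μ k H) (hmeas : ∀ i, Measurable fun ω ↦ H ω i) {C : ℝ} (hC : 8 ≤ C)
    (hV : C * n ≤ Fintype.card V) {m : ℕ} (hm : 2 * m ≤ k) (hmn : (m : ℝ) ≤ n / C + 1) :
    μ.real {ω | n < 2 * (collidingIndices (H ω)).card} ≤ (8 / C) ^ m := by
  set s := n / 2 + 1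
  have mul_le (t) (ht : t ∈ Finset.range m) : C * t ≤ n := by
    have : (t : ℝ) + 1 ≤ m := by exact_mod_cast Finset.mem_range.1 ht
    rw [← le_div_iff₀' (by linarith)]
    linarith
  have prod_pos : 0 < ∏ t ∈ Finset.range m, ((s - 3 * t : ℕ) : ℝ) :=
    Finset.prod_pos fun t ht ↦ by
      have : 8 * t ≤ n := by exact_mod_cast (by gcongr : 8 * (t : ℝ) ≤ C * t).trans (mul_le t ht)
      exact Nat.cast_pos.2 (by lia)
  have pow_le : ((n : ℝ) ^ 2 / Fintype.card V) ^ m ≤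
      (∏ t ∈ Finset.range m, ((s - 3 * t : ℕ) : ℝ)) * (8 / C) ^ m := by
    have hs : (n : ℝ) ≤ 2 * s := by exact_mod_cast (by lia : n ≤ 2 * s)
    calc ((n : ℝ) ^ 2 / Fintype.card V) ^ m
        = ∏ _t ∈ Finset.range m, (n : ℝ) ^ 2 / Fintype.card V := by
          rw [Finset.prod_const, Finset.card_range]
      _ ≤ ∏ t ∈ Finset.range m, ((s - 3 * t : ℕ) : ℝ) * (8 / C) := by
          refine Finset.prod_le_prod (fun _ _ ↦ by positivity) fun t ht ↦ ?_
          have h_sub : (s : ℝ) - 3 * t ≤ (s - 3 * t : ℕ) := by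
            rw [sub_le_iff_le_add]
            exact_mod_cast (by lia : s ≤ s - 3 * t + 3 * t)
          exact (sq_div_le_sub_three_mul hC n.cast_nonneg hV hs (mul_le t ht)).trans (by gcongr)
      _ = (∏ t ∈ Finset.range m, ((s - 3 * t : ℕ) : ℝ)) * (8 / C) ^ m := by
          rw [Finset.prod_mul_distrib, Finset.prod_const, Finset.card_range]
  have h_subset : {ω | n < 2 * (collidingIndices (H ω)).card} ⊆
      {ω | s ≤ (collidingIndices (H ω)).card} := fun ω (hω : n < _) ↦ by
    simp only [mem_ofPred_eq]
    lia
  refine (measureReal_mono h_subset).trans (le_of_mul_le_mul_left ?_ prod_pos)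
  exact (hH.prod_mul_measureReal_le_card_collidingIndices_le hmeas hm s).trans pow_le

end KWiseUniform

theorem stmt0_general {Ω V : Type*} [MeasurableSpace Ω] [Fintype V] [MeasurableSpace V]
    [MeasurableSingletonClass V] (μ : Measure Ω) [IsProbabilityMeasure μ]
    (n k : ℕ) (hn : 1 ≤ n)
    (C : ℝ) (hC : 8 ≤ C) (hV : C * n ≤ Fintype.card V)
    (H : Ω → Fin n → V) (hmeas : ∀ i, Measurable fun ω => H ω i)
    (hind : KWiseUniform μ (2 * k) H) :
    ENNReal.ofReal (1 - (8 / C) ^ (min (k : ℝ) (n / C))) ≤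
      μ {ω | 2 * Set.ncard {i : Fin n | ∃ j, j ≠ i ∧ H ω i = H ω j} ≤ n} := by
  classical
  have hC_pos : 0 < C := by linarith
  have : Nonempty V := Fintype.card_pos_iff.1 <| Nat.cast_pos.1 <|
    (by positivity : 0 < C * n).trans_le hV
  set x := min (k : ℝ) (n / C)
  have hx : 0 ≤ x := by positivity
  set good := {ω | 2 * Set.ncard {i : Fin n | ∃ j, j ≠ i ∧ H ω i = H ω j} ≤ n}
  have compl_good : goodᶜ = {ω | n < 2 * (collidingIndices (H ω)).card} := by
    ext ω
    simp [good, collidingIndices, ← Set.ncard_coe_finset]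
  have tail : μ.real goodᶜ ≤ (8 / C) ^ x := by
    calc μ.real goodᶜ ≤ (8 / C) ^ ⌈x⌉₊ := by
          rw [compl_good]
          refine hind.measureReal_lt_two_mul_card_collidingIndices_le hmeas hC hV ?_ ?_
          · gcongr
            exact Nat.ceil_le.2 (min_le_left _ _)
          · exact (Nat.ceil_lt_add_one hx).le.trans (by gcongr; exact min_le_right _ _)
      _ ≤ (8 / C) ^ x := by
          rw [← Real.rpow_natCast]
          exact Real.rpow_le_rpow_of_exponent_ge (by positivity) ((div_le_one hC_pos).2 hC)
            (Nat.le_ceil x)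
  have one_le : 1 ≤ μ.real good + μ.real goodᶜ := by
    simpa using measureReal_union_le (μ := μ) good goodᶜ
  rw [ENNReal.ofReal_le_iff_le_toReal (by finiteness), ← measureReal_def]
  linarith

theorem stmt0 {Ω V : Type*} [MeasurableSpace Ω] [Fintype V] [MeasurableSpace V] [MeasurableSingletonClass V]
    (μ : Measure Ω) [IsProbabilityMeasure μ]
    (n k : ℕ) (hn : 1 ≤ n) (hk : 1 ≤ k)
    (C : ℝ) (hC : 4 * Real.exp 1 ≤ C)
    (hV : C * n ≤ Fintype.card V)
    (H : Ω → Fin n → V) (hmeas : ∀ i, Measurable fun ω => H ω i)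
    (hind : KWiseUniform μ (2 * k) H) :
    ENNReal.ofReal (1 - 4 * (4 * Real.exp 1 / C) ^ (min (k : ℝ) (n / C))) ≤
      μ {ω | 2 * Set.ncard {i : Fin n | ∃ j, j ≠ i ∧ H ω i = H ω j} ≤ n} := by
  have eight_le : 8 ≤ 4 * Real.exp 1 := by linarith [Real.exp_one_gt_two]
  have hC_pos : 0 < C := by linarith
  have rpow_le : (8 / C) ^ (min (k : ℝ) (n / C)) ≤
      4 * (4 * Real.exp 1 / C) ^ (min (k : ℝ) (n / C)) :=
    le_trans (by gcongr) (le_mul_of_one_le_left (by positivity) (by norm_num))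
  exact (ENNReal.ofReal_le_ofReal (sub_le_sub_left rpow_le 1)).trans
    (stmt0_general μ n k hn C (eight_le.trans hC) hV H hmeas hind)
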